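/- (Operator-valued spectral averaging.) Let H₀ be self-adjoint in the complex separable Hilbert space H and K ∈ B₂(H) Hilbert–Schmidt, and for s ∈ [0,1] let H₀ + sKK* be the self-adjoint operator on dom(H₀). Let Ξ(λ) be the spectral shift operator associated with Φ(z) = I_H + K*(H₀ − z)⁻¹K, i.e., the a.e.-defined family with 0 ≤ Ξ(λ) ∈ B₁(H), ‖Ξ(·)‖_{B₁} ∈ L¹(ℝ; dλ), and log(Φ(z)) = ∫_ℝ dλ Ξ(λ)(λ − z)⁻¹ for z ∈ ℂ∖ℝ. Then ∫₀¹ ds d(K* E_{H₀ + sKK*}(λ) K) = Ξ(λ) dλ in the weak sense; that is, for all f, g ∈ H and every bounded Borel set B ⊆ ℝ, ∫₀¹ ds (f, K* E_{H₀ + sKK*}(B) K g) = ∫_B dλ (f, Ξ(λ) g). -/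

import Mathlib

open Complex Filter MeasureTheory TopologicalSpace ContinuousLinearMap
open scoped InnerProductSpace Topology

noncomputable section

namespace SpectralShift

variable {H : Type*} [NormedAddCommGroup H] [InnerProductSpace ℂ H] [CompleteSpace H]

/-- The imaginary part `(T - T*)/(2i)` of a bounded operator. -/
def imPart (T : H →L[ℂ] H) : H →L[ℂ] H :=
  ((2 * Complex.I)⁻¹ : ℂ) • (T - ContinuousLinearMap.adjoint T)

/-- An operator-valued Herglotz function: analytic on the open upper half-plane with
nonnegative imaginary part there. -/
def IsHerglotz (M : ℂ → H →L[ℂ] H) : Prop :=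
  DifferentiableOn ℂ M {z : ℂ | 0 < z.im} ∧ ∀ z : ℂ, 0 < z.im → (imPart (M z)).IsPositive

/-- The integrand `(T + iλ)⁻¹ - (1 + iλ)⁻¹ I` in the integral representation of `log T`. -/
def logIntegrand (T : H →L[ℂ] H) (t : ℝ) : H →L[ℂ] H :=
  Ring.inverse (T + ((t : ℂ) * Complex.I) • (1 : H →L[ℂ] H)) -
    (((1 : ℂ) + (t : ℂ) * Complex.I)⁻¹) • (1 : H →L[ℂ] H)

/-- `log T = -i ∫₀^∞ ((T + iλ)⁻¹ - (1 + iλ)⁻¹ I) dλ` as a norm-convergent improper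
Riemann integral, for a dissipative boundedly invertible `T`. -/
def opLog (T : H →L[ℂ] H) : H →L[ℂ] H :=
  limUnder atTop (fun R : ℝ => (-Complex.I) • ∫ t in (0:ℝ)..R, logIntegrand T t)

/-- The logarithm `log S = (log S*)*` of an operator `S` with `-S` dissipative. -/
def opLogAnti (T : H →L[ℂ] H) : H →L[ℂ] H :=
  ContinuousLinearMap.adjoint (opLog (ContinuousLinearMap.adjoint T))

/-- The logarithm of a Herglotz-type operator family on `ℂ ∖ ℝ`, using `log T` in the
upper half-plane and the convention `log S = (log S*)*` in the lower half-plane. -/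
def logHerg (Φ : ℂ → H →L[ℂ] H) (z : ℂ) : H →L[ℂ] H :=
  if 0 < z.im then opLog (Φ z) else opLogAnti (Φ z)

/-- The logarithm of an anti-Herglotz-type operator family on `ℂ ∖ ℝ` (nonpositive
imaginary part in the upper half-plane). -/
def logAntiHerg (Φ : ℂ → H →L[ℂ] H) (z : ℂ) : H →L[ℂ] H :=
  if 0 < z.im then opLogAnti (Φ z) else opLog (Φ z)

/-- Trace class: absolute summability of the diagonal in every Hilbert basis. -/
def IsTraceClass (T : H →L[ℂ] H) : Prop :=
  ∀ (w : Set H) (b : HilbertBasis w ℂ H), Summable fun i => ‖⟪(b i : H), T (b i)⟫_ℂ‖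

/-- The trace, computed in a fixed Hilbert basis (basis-independent for trace
class operators). -/
def trH (T : H →L[ℂ] H) : ℂ :=
  ∑' i, ⟪((exists_hilbertBasis ℂ H).choose_spec.choose i : H),
    T ((exists_hilbertBasis ℂ H).choose_spec.choose i)⟫_ℂ

/-- The trace norm, via duality with bounded operators (the correct value for trace
class operators). -/
def traceNorm (T : H →L[ℂ] H) : ℝ :=
  ⨆ B : {B : H →L[ℂ] H // ‖B‖ ≤ 1}, ‖trH (T * (B : H →L[ℂ] H))‖

/-- Hilbert-Schmidt operators. -/
def IsHilbertSchmidt (K : H →L[ℂ] H) : Prop :=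
  ∀ (w : Set H) (b : HilbertBasis w ℂ H), Summable fun i => ‖K (b i)‖ ^ 2

/-- A (possibly unbounded) self-adjoint operator in `H`: a densely defined symmetric
operator possessing everywhere-defined bounded resolvents at every non-real point. -/
structure SelfAdjointOp (H : Type*) [NormedAddCommGroup H] [InnerProductSpace ℂ H]
    [CompleteSpace H] where
  dom : Submodule ℂ H
  dense_dom : Dense (dom : Set H)
  op : dom →ₗ[ℂ] H
  symmetric : ∀ x y : dom, ⟪op x, (y : H)⟫_ℂ = ⟪(x : H), op y⟫_ℂ
  resolvent : ℂ → H →L[ℂ] H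
  resolvent_mem : ∀ {z : ℂ}, z.im ≠ 0 → ∀ x : H, resolvent z x ∈ dom
  op_resolvent : ∀ {z : ℂ} (hz : z.im ≠ 0) (x : H),
    op ⟨resolvent z x, resolvent_mem hz x⟩ - z • resolvent z x = x
  resolvent_op : ∀ {z : ℂ} (hz : z.im ≠ 0) (x : dom),
    resolvent z (op x - z • (x : H)) = x

/-- `B = A + V` for a bounded operator `V` (with `dom B = dom A`). -/
def IsSumOf (B A : SelfAdjointOp H) (V : H →L[ℂ] H) : Prop :=
  B.dom = A.dom ∧ ∀ (x : H) (hxB : x ∈ B.dom) (hxA : x ∈ A.dom),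
    B.op ⟨x, hxB⟩ = A.op ⟨x, hxA⟩ + V x

/-- `R` is the (bounded, everywhere defined) resolvent `(A - z)⁻¹` of `A` at `z`. -/
def SelfAdjointOp.IsResolventAt (A : SelfAdjointOp H) (z : ℂ) (R : H →L[ℂ] H) : Prop :=
  (∀ x : H, R x ∈ A.dom) ∧
  (∀ (x : H) (hx : R x ∈ A.dom), A.op ⟨R x, hx⟩ - z • R x = x) ∧
  (∀ x : A.dom, R (A.op x - z • (x : H)) = x)

/-- `E` is the projection-valued spectral measure of the self-adjoint operator `A`. -/
def IsSpectralMeasure (A : SelfAdjointOp H) (E : Set ℝ → H →L[ℂ] H) : Prop :=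
  (∀ B : Set ℝ, MeasurableSet B → IsSelfAdjoint (E B)) ∧
  (∀ B C : Set ℝ, MeasurableSet B → MeasurableSet C → E B * E C = E (B ∩ C)) ∧
  (E Set.univ = 1) ∧
  (∀ (f : ℕ → Set ℝ), (∀ n, MeasurableSet (f n)) → Pairwise (Function.onFun Disjoint f) →
    ∀ x : H, HasSum (fun n => E (f n) x) (E (⋃ n, f n) x)) ∧
  ∃ μ : H → Measure ℝ,
    (∀ (f : H) (B : Set ℝ), MeasurableSet B → μ f B = ENNReal.ofReal (⟪f, E B f⟫_ℂ).re) ∧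
    ∀ (z : ℂ), z.im ≠ 0 → ∀ f : H,
      ⟪f, A.resolvent z f⟫_ℂ = ∫ l : ℝ, ((l : ℂ) - z)⁻¹ ∂(μ f)

/-- Invertibility of `T` restricted to the range of the orthogonal projection `P`
(for `T` commuting with `P`), with inverse `S` supported in `ran P`. -/
def InvertibleOn (T P : H →L[ℂ] H) : Prop :=
  ∃ S : H →L[ℂ] H, S * P = S ∧ P * S = S ∧ S * (T * P) = P ∧ (P * T) * S = P

/-- The spectral projection `J₊ = (I + J)/2` onto `H₊` for a self-adjoint unitary `J`. -/
def Jplus (J : H →L[ℂ] H) : H →L[ℂ] H := ((2 : ℂ)⁻¹) • (1 + J)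

/-- The spectral projection `J₋ = (I - J)/2` onto `H₋` for a self-adjoint unitary `J`. -/
def Jminus (J : H →L[ℂ] H) : H →L[ℂ] H := ((2 : ℂ)⁻¹) • (1 - J)

/-- `Φ₊(z) = I + J₊ K* (H₀ - z)⁻¹ K J₊`, the operator on `H` inducing `Φ₊(z)` on `H₊`
(and the identity on `H₋`). -/
def PhiPlus (H0 : SelfAdjointOp H) (J K : H →L[ℂ] H) (z : ℂ) : H →L[ℂ] H :=
  1 + Jplus J * (ContinuousLinearMap.adjoint K * H0.resolvent z * K) * Jplus J

/-- `Φ̃₋(z) = I - J₋ K* (H₊ - z)⁻¹ K J₋`, the operator on `H` inducing `Φ̃₋(z)` on `H₋`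
(and the identity on `H₊`). -/
def PhiMinusT (Hp : SelfAdjointOp H) (J K : H →L[ℂ] H) (z : ℂ) : H →L[ℂ] H :=
  1 - Jminus J * (ContinuousLinearMap.adjoint K * Hp.resolvent z * K) * Jminus J

/-!
For `z` in the upper half-plane put `M = K* (H₀ - z)⁻¹ K` and `H_s = H₀ + s K K*`. By the resolvent
identity `K* (H_s - z)⁻¹ K = (1 + s M)⁻¹ M`, which is formally `∂_s log (1 + s M)`. Since `M`
commutes with `1`, the one-form `(1 + s M + i t)⁻¹ (M ds + i dt)` is closed; Green's theorem on
`[0, 1] × [0, R]` with `R → ∞` turns the integral defining `log (1 + M)` into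
`∫₀¹ K* (H_s - z)⁻¹ K ds`.

Hence the spectral measures of `K f`, averaged over `s`, have the same Stieltjes transform as
`⟪f, Ξ(λ) f⟫ dλ`. The imaginary part of a Stieltjes transform is `π` times a Poisson integral,
that is, the density of a convolution with a Cauchy distribution, and these convolutions determine
the measure because they converge weakly to it. Polarization passes from `f` to pairs `f, g`.
-/

section Dissipative

variable {V : Type*} [NormedAddCommGroup V] [InnerProductSpace ℂ V]

/-- `T` is dissipative: the numerical range of `T` lies in the closed upper half-plane. -/
def IsDissipative (T : V →L[ℂ] V) : Prop :=
  ∀ x, 0 ≤ (⟪x, T x⟫_ℂ).im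

lemma IsDissipative.one_add_smul {T : V →L[ℂ] V} (hT : IsDissipative T) {s : ℝ} (hs : 0 ≤ s) :
    IsDissipative (1 + s • T) := by
  intro x
  simpa [inner_add_right, inner_smul_right_eq_smul, inner_self_eq_norm_sq_to_K, ← ofReal_pow]
    using mul_nonneg hs (hT x)

lemma IsDissipative.mul_norm_sq_le {T : V →L[ℂ] V} (hT : IsDissipative T) (t : ℝ) (x : V) :
    t * ‖x‖ ^ 2 ≤ ‖⟪x, (T + t • I • (1 : V →L[ℂ] V)) x⟫_ℂ‖ := by
  have him : (⟪x, (T + t • I • (1 : V →L[ℂ] V)) x⟫_ℂ).im = (⟪x, T x⟫_ℂ).im + t * ‖x‖ ^ 2 := by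
    simp [inner_smul_right, inner_smul_right_eq_smul, inner_self_eq_norm_sq_to_K,
      ← ofReal_pow]
  calc t * ‖x‖ ^ 2 ≤ (⟪x, (T + t • I • (1 : V →L[ℂ] V)) x⟫_ℂ).im := by linarith [hT x]
    _ ≤ _ := (le_abs_self _).trans (abs_im_le_norm _)

end Dissipative

namespace IsDissipative

variable {T : H →L[ℂ] H}

lemma adjoint_conj {G : Type*} [NormedAddCommGroup G] [InnerProductSpace ℂ G] [CompleteSpace G]
    (hT : IsDissipative T) (K : G →L[ℂ] H) : IsDissipative (adjoint K ∘L T ∘L K) := by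
  intro x
  simpa [adjoint_inner_right] using hT (K x)

lemma isUnit_add_smul_I (hT : IsDissipative T) {t : ℝ} (ht : 0 < t) :
    IsUnit (T + t • I • (1 : H →L[ℂ] H)) := by
  refine isUnit_of_forall_le_norm_inner_map _ (c := ⟨t, ht.le⟩) ht fun x => ?_
  rw [norm_inner_symm, mul_comm]
  exact hT.mul_norm_sq_le t x

lemma norm_inverse_add_smul_I_le (hT : IsDissipative T) {t : ℝ} (ht : 0 < t) :
    ‖Ring.inverse (T + t • I • (1 : H →L[ℂ] H))‖ ≤ t⁻¹ := by
  refine opNorm_le_bound _ (by positivity) fun y => ?_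
  set S := T + t • I • (1 : H →L[ℂ] H)
  set x := Ring.inverse S y
  have hSx : S x = y := congr($(Ring.mul_inverse_cancel S (hT.isUnit_add_smul_I ht)) y)
  have hle : t * ‖x‖ ^ 2 ≤ ‖x‖ * ‖y‖ :=
    (hT.mul_norm_sq_le t x).trans (hSx ▸ norm_inner_le_norm x (S x))
  rw [inv_mul_eq_div, le_div_iff₀' ht]
  rcases (norm_nonneg x).eq_or_lt with hx | hx
  · simp [← hx]
  · exact le_of_mul_le_mul_left (by linarith [sq ‖x‖]) hx

end IsDissipative

lemma SelfAdjointOp.isDissipative_resolvent (A : SelfAdjointOp H) {z : ℂ} (hz : 0 < z.im) :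
    IsDissipative (A.resolvent z) := by
  intro x
  set y : A.dom := ⟨A.resolvent z x, A.resolvent_mem hz.ne' x⟩
  have hx : A.op y - z • (y : H) = x := A.op_resolvent hz.ne' x
  have hsymm : (⟪A.op y, (y : H)⟫_ℂ).im = 0 := by
    rw [← conj_eq_iff_im, inner_conj_symm, A.symmetric]
  have him : (⟪x, (y : H)⟫_ℂ).im = z.im * ‖(y : H)‖ ^ 2 := by
    rw [← hx, inner_sub_left, inner_smul_left, inner_self_eq_norm_sq_to_K, sub_im, hsymm]
    simp [← ofReal_pow]
  exact him ▸ by positivity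

section Pencil

variable {A : Type*} [NormedRing A] [NormedAlgebra ℝ A]

/-- The two-parameter pencil `(s, t) ↦ c + s a + t b` spanned by `a` and `b` through `c`. -/
def pencil (a b c : A) (p : ℝ × ℝ) : A :=
  c + p.1 • a + p.2 • b

lemma hasFDerivAt_pencil (a b c : A) (p : ℝ × ℝ) :
    HasFDerivAt (pencil a b c)
      ((fst ℝ ℝ ℝ).smulRight a + (snd ℝ ℝ ℝ).smulRight b) p := by
  have h₁ := (hasFDerivAt_fst (𝕜 := ℝ) (p := p)).smul_const a
  have h₂ := (hasFDerivAt_snd (𝕜 := ℝ) (p := p)).smul_const b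
  exact (h₁.const_add c).add h₂

variable [CompleteSpace A]

lemma hasFDerivAt_inverse_pencil (a b c : A) {p : ℝ × ℝ} (hp : IsUnit (pencil a b c p)) :
    HasFDerivAt (fun q => Ring.inverse (pencil a b c q))
      ((-mulLeftRight ℝ A (Ring.inverse (pencil a b c p)) (Ring.inverse (pencil a b c p))) ∘L
        ((fst ℝ ℝ ℝ).smulRight a + (snd ℝ ℝ ℝ).smulRight b)) p := by
  obtain ⟨u, hu⟩ := hp
  have h := hu ▸ hasFDerivAt_ringInverse (𝕜 := ℝ) u
  rw [← hu, Ring.inverse_unit]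
  exact h.comp p (hasFDerivAt_pencil a b c p)

lemma commute_inverse_left {M : Type*} [MonoidWithZero M] {x y : M} (h : Commute x y) :
    Commute (Ring.inverse x) y := by
  by_cases hx : IsUnit x
  · obtain ⟨u, rfl⟩ := hx
    simpa using h.units_inv_left
  · simp [Ring.inverse_non_unit x hx]

/-- For commuting `a`, `b`, `c` the one-form `(c + s a + t b)⁻¹ (a ds + b dt)`, formally the
differential of `log (c + s a + t b)`, is closed. -/
lemma integral_inverse_pencil_sub {a b c : A} (hab : Commute a b) (hca : Commute c a)
    (hcb : Commute c b) {s₀ s₁ t₀ t₁ : ℝ}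
    (hu : ∀ p ∈ Set.uIcc s₀ s₁ ×ˢ Set.uIcc t₀ t₁, IsUnit (pencil a b c p)) :
    (∫ t in t₀..t₁, Ring.inverse (pencil a b c (s₁, t)) * b) -
        ∫ t in t₀..t₁, Ring.inverse (pencil a b c (s₀, t)) * b =
      (∫ s in s₀..s₁, Ring.inverse (pencil a b c (s, t₁)) * a) -
        ∫ s in s₀..s₁, Ring.inverse (pencil a b c (s, t₀)) * a := by
  let W := fun q => Ring.inverse (pencil a b c q)
  have hW (q : ℝ × ℝ) : Ring.inverse (pencil a b c q) = W q := rfl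
  have hderiv (d : A) {p : ℝ × ℝ} (hp : p ∈ Set.uIcc s₀ s₁ ×ˢ Set.uIcc t₀ t₁) :
      HasFDerivAt (fun q => W q * d) _ p :=
    (hasFDerivAt_inverse_pencil a b c (hu p hp)).mul_const' d
  have hcont (d : A) : ContinuousOn (fun p => W p * d) (Set.uIcc s₀ s₁ ×ˢ Set.uIcc t₀ t₁) :=
    fun p hp => (hderiv d hp).continuousAt.continuousWithinAt
  have hopen : Set.Ioo (min s₀ s₁) (max s₀ s₁) ×ˢ Set.Ioo (min t₀ t₁) (max t₀ t₁) ⊆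
      Set.uIcc s₀ s₁ ×ˢ Set.uIcc t₀ t₁ :=
    Set.prod_mono Set.Ioo_subset_Icc_self Set.Ioo_subset_Icc_self
  have hWa (p : ℝ × ℝ) : Commute (W p) a := commute_inverse_left <|
    (hca.add_left ((Commute.refl a).smul_left _)).add_left (hab.symm.smul_left _)
  have hWb (p : ℝ × ℝ) : Commute (W p) b := commute_inverse_left <|
    (hcb.add_left (hab.smul_left _)).add_left ((Commute.refl b).smul_left _)
  have hdiv (p : ℝ × ℝ) : -(W p * a * W p * b) + W p * b * W p * a = 0 := by
    rw [neg_add_eq_zero]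
    simpa only [mul_assoc] using
      (((Commute.refl _).mul_right (hWb p)).mul_left ((hWa p).symm.mul_right hab)).eq
  have hgreen := integral2_divergence_prod_of_hasFDerivAt (fun p => W p * b) (fun p => -(W p * a))
    _ _ s₀ t₀ s₁ t₁ (hcont b) (hcont a).neg
    (fun p hp => hderiv b (hopen hp)) (fun p hp => (hderiv a (hopen hp)).neg)
  simp only [smul_apply, comp_apply, add_apply, smulRight_apply, coe_fst', coe_snd', neg_apply,
    mulLeftRight_apply, one_smul, zero_smul, add_zero, zero_add, op_smul_eq_mul, neg_mul, neg_neg,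
    hW, hdiv, intervalIntegral.integral_zero, integrableOn_zero, intervalIntegral.integral_neg,
    forall_const] at hgreen
  simp only [hW]
  rw [← sub_eq_zero, hgreen]
  abel

end Pencil

lemma IsDissipative.isUnit_pencil {M : H →L[ℂ] H} (hM : IsDissipative M)
    (hu : ∀ s ∈ Set.Icc (0 : ℝ) 1, IsUnit (1 + s • M)) {p : ℝ × ℝ}
    (hs : p.1 ∈ Set.Icc 0 1) (ht : 0 ≤ p.2) : IsUnit (pencil M (I • 1) 1 p) := by
  rcases ht.eq_or_lt with ht | ht
  · simpa [pencil, ← ht] using hu p.1 hs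
  · exact (hM.one_add_smul hs.1).isUnit_add_smul_I ht

lemma logIntegrand_one_add (M : H →L[ℂ] H) (t : ℝ) :
    I • logIntegrand (1 + M) t = Ring.inverse (pencil M (I • 1) 1 (1, t)) * (I • 1) -
      Ring.inverse (pencil M (I • 1) 1 (0, t)) * (I • 1) := by
  have hne : 1 + t * I ≠ 0 := fun h => by simpa using congrArg re h
  have hinv : Ring.inverse ((1 + t * I) • (1 : H →L[ℂ] H)) = (1 + t * I)⁻¹ • 1 :=
    Ring.inverse_unit ⟨_, (1 + t * I)⁻¹ • 1, by simp [smul_smul, hne], by simp [smul_smul, hne]⟩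
  simp [logIntegrand, pencil, smul_sub, ← hinv, add_smul, mul_smul]

lemma IsDissipative.neg_I_smul_integral_logIntegrand {M : H →L[ℂ] H} (hM : IsDissipative M)
    (hu : ∀ s ∈ Set.Icc (0 : ℝ) 1, IsUnit (1 + s • M)) {R : ℝ} (hR : 0 ≤ R) :
    -I • ∫ t in 0..R, logIntegrand (1 + M) t =
      (∫ s in 0..1, Ring.inverse (1 + s • M) * M) -
        ∫ s in 0..1, Ring.inverse (pencil M (I • 1) 1 (s, R)) * M := by
  have hu' : ∀ p ∈ Set.uIcc 0 1 ×ˢ Set.uIcc 0 R, IsUnit (pencil M (I • 1) 1 p) := by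
    rintro p ⟨hs, ht⟩
    rw [Set.uIcc_of_le zero_le_one] at hs
    rw [Set.uIcc_of_le hR] at ht
    exact hM.isUnit_pencil hu hs ht.1
  have hint {s : ℝ} (hs : s ∈ Set.uIcc 0 1) :
      IntervalIntegrable (fun t => Ring.inverse (pencil M (I • 1) 1 (s, t)) * (I • 1)) volume 0 R :=
    ContinuousOn.intervalIntegrable fun t ht =>
      (((hasFDerivAt_inverse_pencil _ _ _ (hu' (s, t) ⟨hs, ht⟩)).continuousAt.comp
        (Continuous.prodMk_right s).continuousAt).mul continuousAt_const).continuousWithinAt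
  have hpencil (s : ℝ) : pencil M (I • 1) 1 (s, 0) = 1 + s • M := by simp [pencil]
  have hgreen := integral_inverse_pencil_sub ((Commute.one_right M).smul_right I)
    (Commute.one_left M) (Commute.one_left _) hu'
  rw [← intervalIntegral.integral_sub (hint Set.right_mem_uIcc) (hint Set.left_mem_uIcc)] at hgreen
  simp_rw [← logIntegrand_one_add, hpencil, intervalIntegral.integral_smul] at hgreen
  rw [neg_smul, hgreen, neg_sub]

lemma IsDissipative.norm_inverse_pencil_le {M : H →L[ℂ] H} (hM : IsDissipative M) {s t : ℝ}
    (hs : 0 ≤ s) (ht : 0 < t) : ‖Ring.inverse (pencil M (I • 1) 1 (s, t))‖ ≤ t⁻¹ :=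
  (hM.one_add_smul hs).norm_inverse_add_smul_I_le ht

lemma IsDissipative.opLog_one_add {M : H →L[ℂ] H} (hM : IsDissipative M)
    (hu : ∀ s ∈ Set.Icc (0 : ℝ) 1, IsUnit (1 + s • M)) :
    opLog (1 + M) = ∫ s in 0..1, Ring.inverse (1 + s • M) * M := by
  refine Tendsto.limUnder_eq ?_
  have hrem : Tendsto (fun R : ℝ => ∫ s in 0..1, Ring.inverse (pencil M (I • 1) 1 (s, R)) * M)
      atTop (𝓝 0) := by
    have hbound : Tendsto (fun R : ℝ => R⁻¹ * ‖M‖) atTop (𝓝 0) := by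
      simpa using tendsto_inv_atTop_zero.mul_const ‖M‖
    refine squeeze_zero_norm' ?_ hbound
    filter_upwards [eventually_gt_atTop 0] with R hR
    have hle (s : ℝ) (hs : s ∈ Set.uIoc 0 1) :
        ‖Ring.inverse (pencil M (I • 1) 1 (s, R)) * M‖ ≤ R⁻¹ * ‖M‖ := by
      rw [Set.uIoc_of_le zero_le_one] at hs
      exact norm_mul_le_of_le (hM.norm_inverse_pencil_le hs.1.le hR) le_rfl
    simpa using intervalIntegral.norm_integral_le_of_norm_le_const hle
  rw [← sub_zero (∫ s in 0..1, _)]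
  refine (tendsto_const_nhds.sub hrem).congr' ?_
  filter_upwards [eventually_ge_atTop 0] with R hR
  exact (hM.neg_I_smul_integral_logIntegrand hu hR).symm

section Resolvent

variable {G : Type*} [NormedAddCommGroup G] [InnerProductSpace ℂ G] [CompleteSpace G]

/-- The operator `K* (A - z)⁻¹ K`, so that `Φ(z) = I + K* (H₀ - z)⁻¹ K` is `1` plus the
sandwiched resolvent of `H₀`. -/
def SelfAdjointOp.sandwich (A : SelfAdjointOp H) (K : G →L[ℂ] H) (z : ℂ) : G →L[ℂ] G :=
  adjoint K ∘L A.resolvent z ∘L K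

lemma SelfAdjointOp.isDissipative_sandwich (A : SelfAdjointOp H) (K : G →L[ℂ] H) {z : ℂ}
    (hz : 0 < z.im) : IsDissipative (A.sandwich K z) :=
  (A.isDissipative_resolvent hz).adjoint_conj K

namespace IsSumOf

variable {A B : SelfAdjointOp H} {V : H →L[ℂ] H} {K : G →L[ℂ] H} {s : ℝ} {z : ℂ}

lemma symm (h : IsSumOf B A V) : IsSumOf A B (-V) :=
  ⟨h.1.symm, fun x hxA hxB => by simp [h.2 x hxB hxA]⟩

lemma resolvent_sub_resolvent (h : IsSumOf B A V) (hz : z.im ≠ 0) :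
    A.resolvent z - B.resolvent z = A.resolvent z ∘L V ∘L B.resolvent z := by
  ext x
  have hB : B.resolvent z x ∈ B.dom := B.resolvent_mem hz x
  have hA : B.resolvent z x ∈ A.dom := h.1 ▸ hB
  have hx : A.op ⟨_, hA⟩ - z • B.resolvent z x + V (B.resolvent z x) = x := by
    rw [← add_sub_right_comm, ← h.2 _ hB hA, B.op_resolvent hz]
  have hRA := congrArg (A.resolvent z) hx
  rw [map_add, A.resolvent_op hz ⟨_, hA⟩] at hRA
  simp [← hRA]

lemma sandwich_sub_sandwich (h : IsSumOf B A ((s : ℂ) • (K ∘L adjoint K))) (hz : z.im ≠ 0) :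
    A.sandwich K z - B.sandwich K z = s • (A.sandwich K z * B.sandwich K z) := by
  ext x
  have hx := congr(adjoint K ($(h.resolvent_sub_resolvent hz) (K x)))
  simpa [SelfAdjointOp.sandwich] using hx

lemma sandwich_sub_sandwich' (h : IsSumOf B A ((s : ℂ) • (K ∘L adjoint K))) (hz : z.im ≠ 0) :
    A.sandwich K z - B.sandwich K z = s • (B.sandwich K z * A.sandwich K z) := by
  have h' : IsSumOf A B (((-s : ℝ) : ℂ) • (K ∘L adjoint K)) := by simpa using h.symm
  rw [← neg_sub, h'.sandwich_sub_sandwich hz, neg_smul, neg_neg]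

lemma isUnit_one_add_smul_sandwich (h : IsSumOf B A ((s : ℂ) • (K ∘L adjoint K)))
    (hz : z.im ≠ 0) : IsUnit (1 + s • A.sandwich K z) := by
  refine ⟨⟨_, 1 - s • B.sandwich K z, ?_, ?_⟩, rfl⟩
  · rw [mul_sub, mul_one, add_mul, one_mul, smul_mul_smul_comm, mul_smul,
      ← h.sandwich_sub_sandwich hz, smul_sub]
    abel
  · rw [mul_add, mul_one, sub_mul, one_mul, smul_mul_smul_comm, mul_smul,
      ← h.sandwich_sub_sandwich' hz, smul_sub]
    abel

lemma sandwich_eq (h : IsSumOf B A ((s : ℂ) • (K ∘L adjoint K))) (hz : z.im ≠ 0) :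
    B.sandwich K z = Ring.inverse (1 + s • A.sandwich K z) * A.sandwich K z := by
  rw [eq_comm, Ring.inverse_mul_eq_iff_eq_mul _ _ _ (h.isUnit_one_add_smul_sandwich hz), add_mul,
    one_mul, smul_mul_assoc, ← h.sandwich_sub_sandwich hz, add_sub_cancel]

end IsSumOf

lemma opLog_one_add_sandwich {A : SelfAdjointOp H} {K : G →L[ℂ] H} {B : ℝ → SelfAdjointOp H}
    (hB : ∀ s ∈ Set.Icc (0 : ℝ) 1, IsSumOf (B s) A ((s : ℂ) • (K ∘L adjoint K)))
    {z : ℂ} (hz : 0 < z.im) :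
    opLog (1 + A.sandwich K z) = ∫ s in 0..1, (B s).sandwich K z := by
  rw [(A.isDissipative_sandwich K hz).opLog_one_add fun s hs =>
    (hB s hs).isUnit_one_add_smul_sandwich hz.ne']
  refine intervalIntegral.integral_congr fun s hs => ?_
  rw [Set.uIcc_of_le zero_le_one] at hs
  exact ((hB s hs).sandwich_eq hz.ne').symm

lemma continuousOn_sandwich {A : SelfAdjointOp H} {K : G →L[ℂ] H} {B : ℝ → SelfAdjointOp H}
    {S : Set ℝ} (hB : ∀ s ∈ S, IsSumOf (B s) A ((s : ℂ) • (K ∘L adjoint K)))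
    {z : ℂ} (hz : z.im ≠ 0) : ContinuousOn (fun s => (B s).sandwich K z) S := by
  have hcont : ContinuousOn (fun s : ℝ =>
      Ring.inverse (1 + s • A.sandwich K z) * A.sandwich K z) S := fun s hs => by
    obtain ⟨u, hu⟩ := (hB s hs).isUnit_one_add_smul_sandwich hz
    have hinv := hu ▸ NormedRing.inverse_continuousAt u
    have hlin : Continuous fun s : ℝ => 1 + s • A.sandwich K z := by fun_prop
    exact ((hinv.comp_of_eq hlin.continuousAt rfl).mul continuousAt_const).continuousWithinAt
  exact hcont.congr fun s hs => (hB s hs).sandwich_eq hz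

end Resolvent

section Measures

open ProbabilityTheory
open scoped NNReal ENNReal BoundedContinuousFunction

/-- The Stieltjes (or Borel) transform of a measure on the line. -/
def stieltjesTransform (ν : Measure ℝ) (z : ℂ) : ℂ :=
  ∫ l : ℝ, ((l : ℂ) - z)⁻¹ ∂ν

/-- The Poisson integral of a measure on the line at height `γ`. The Poisson kernel of the
half-plane is the density of the Cauchy distribution of scale `γ`. -/
def poissonIntegral (ν : Measure ℝ) (γ : ℝ≥0) (x : ℝ) : ℝ≥0∞ :=
  ∫⁻ l, cauchyPDF l γ x ∂ν

lemma measurable_uncurry_cauchyPDF (γ : ℝ≥0) :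
    Measurable fun p : ℝ × ℝ => cauchyPDF p.1 γ p.2 := by
  simp only [cauchyPDF_def, cauchyPDFReal_def]
  fun_prop

lemma measurable_cauchyPDF_location (γ : ℝ≥0) (x : ℝ) : Measurable fun l => cauchyPDF l γ x := by
  unfold cauchyPDF cauchyPDFReal
  fun_prop

lemma cauchyPDF_le (l : ℝ) (γ : ℝ≥0) (x : ℝ) :
    cauchyPDF l γ x ≤ ENNReal.ofReal (Real.pi⁻¹ * (γ : ℝ)⁻¹) := by
  rw [cauchyPDF_def, cauchyPDFReal_def']
  exact ENNReal.ofReal_le_ofReal <| mul_le_of_le_one_right (by positivity) <|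
    inv_le_one_of_one_le₀ (le_add_of_nonneg_right (sq_nonneg _))

lemma cauchyPDF_scale {γ : ℝ≥0} (hγ : γ ≠ 0) (x : ℝ) :
    ENNReal.ofReal γ * cauchyPDF 0 γ (γ * x) = cauchyPDF 0 1 x := by
  have hγ' : (γ : ℝ) ≠ 0 := by exact_mod_cast hγ
  rw [cauchyPDF_def, cauchyPDF_def, ← ENNReal.ofReal_mul γ.coe_nonneg, cauchyPDFReal_def',
    cauchyPDFReal_def']
  congr 1
  simp [field]

lemma cauchyMeasure_eq_map (γ : ℝ≥0) :
    cauchyMeasure 0 γ = (cauchyMeasure 0 1).map fun x : ℝ => γ * x := by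
  by_cases hγ : γ = 0
  · simp [hγ]
  have hγ' : (γ : ℝ) ≠ 0 := by exact_mod_cast hγ
  refine Measure.ext_of_lintegral _ fun f hf => ?_
  have hpdf (l : ℝ) (c : ℝ≥0) : Measurable (cauchyPDF l c) := by fun_prop
  calc ∫⁻ x, f x ∂(cauchyMeasure 0 γ)
      = ∫⁻ x, cauchyPDF 0 γ x * f x := by
        rw [cauchyMeasure_of_scale_ne_zero _ hγ]
        exact lintegral_withDensity_eq_lintegral_mul _ (hpdf 0 γ) hf
    _ = ENNReal.ofReal |(γ : ℝ)| * ∫⁻ x, cauchyPDF 0 γ (γ * x) * f (γ * x) := by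
        conv_lhs => rw [← Real.smul_map_volume_mul_left hγ', lintegral_smul_measure,
          lintegral_map (by fun_prop) (by fun_prop), smul_eq_mul]
    _ = ∫⁻ x, cauchyPDF 0 1 x * f (γ * x) := by
        rw [← lintegral_const_mul _ (by fun_prop)]
        simp_rw [NNReal.abs_eq, ← mul_assoc, cauchyPDF_scale hγ]
    _ = ∫⁻ x, f x ∂((cauchyMeasure 0 1).map fun x : ℝ => γ * x) := by
        rw [lintegral_map hf (by fun_prop), cauchyMeasure_of_scale_ne_zero _ one_ne_zero]
        exact (lintegral_withDensity_eq_lintegral_mul _ (hpdf 0 1) (by fun_prop)).symm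

lemma conv_univ {M : Type*} [AddMonoid M] [MeasurableSpace M] [MeasurableAdd₂ M] (ν μ : Measure M)
    [SFinite μ] : ν.conv μ Set.univ = ν Set.univ * μ Set.univ := by
  rw [Measure.conv, Measure.map_apply measurable_add .univ, Set.preimage_univ,
    ← Set.univ_prod_univ, Measure.prod_prod]

lemma lintegral_conv_cauchyMeasure (ν : Measure ℝ) [SFinite ν] (γ : ℝ≥0) {f : ℝ → ℝ≥0∞}
    (hf : Measurable f) : ∫⁻ x, f x ∂(ν.conv (cauchyMeasure 0 γ)) =
      ∫⁻ p : ℝ × ℝ, f (p.1 + γ * p.2) ∂(ν.prod (cauchyMeasure 0 1)) := by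
  rw [Measure.lintegral_conv hf, lintegral_prod _ (by fun_prop)]
  refine lintegral_congr fun x => ?_
  rw [cauchyMeasure_eq_map γ, lintegral_map (by fun_prop) (by fun_prop)]

lemma conv_cauchyMeasure (ν : Measure ℝ) [SFinite ν] {γ : ℝ≥0} (hγ : γ ≠ 0) :
    ν.conv (cauchyMeasure 0 γ) = volume.withDensity (poissonIntegral ν γ) := by
  have hmeas := measurable_uncurry_cauchyPDF γ
  refine Measure.ext_of_lintegral _ fun f hf => ?_
  calc ∫⁻ x, f x ∂(ν.conv (cauchyMeasure 0 γ))
      = ∫⁻ l, ∫⁻ y, cauchyPDF l γ (l + y) * f (l + y) ∂volume ∂ν := by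
        rw [Measure.lintegral_conv hf, cauchyMeasure_of_scale_ne_zero _ hγ]
        refine lintegral_congr fun l => ?_
        rw [lintegral_withDensity_eq_lintegral_mul _ (by fun_prop) (by fun_prop)]
        simp [cauchyPDF_def, cauchyPDFReal_def]
    _ = ∫⁻ l, ∫⁻ x, cauchyPDF l γ x * f x ∂volume ∂ν :=
        lintegral_congr fun l => lintegral_add_left_eq_self (fun x => cauchyPDF l γ x * f x) l
    _ = ∫⁻ x, poissonIntegral ν γ x * f x := by
        rw [lintegral_lintegral_swap (by fun_prop)]
        exact lintegral_congr fun x => lintegral_mul_const _ (by fun_prop)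
    _ = ∫⁻ x, f x ∂(volume.withDensity (poissonIntegral ν γ)) := by
        rw [lintegral_withDensity_eq_lintegral_mul _ _ hf]
        · rfl
        · exact hmeas.lintegral_prod_left'

lemma tendsto_lintegral_conv_cauchyMeasure (ν : Measure ℝ) [IsFiniteMeasure ν] (f : ℝ →ᵇ ℝ≥0) :
    Tendsto (fun γ => ∫⁻ x, f x ∂(ν.conv (cauchyMeasure 0 γ))) (𝓝[>] 0) (𝓝 (∫⁻ x, f x ∂ν)) := by
  have hf : Measurable fun x => (f x : ℝ≥0∞) := by fun_prop
  simp_rw [lintegral_conv_cauchyMeasure ν _ hf]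
  have hlim : ∫⁻ x, f x ∂ν = ∫⁻ p : ℝ × ℝ, f p.1 ∂(ν.prod (cauchyMeasure 0 1)) := by
    rw [lintegral_prod _ (by fun_prop)]
    simp
  rw [hlim]
  refine tendsto_lintegral_filter_of_dominated_convergence (fun _ => (nndist f 0 : ℝ≥0∞))
    (Eventually.of_forall fun γ => by fun_prop)
    (Eventually.of_forall fun γ => Eventually.of_forall fun p => ?_) ?_
    (Eventually.of_forall fun p => ?_)
  · exact ENNReal.coe_le_coe.2 <| BoundedContinuousFunction.NNReal.upper_bound f _
  · simp [ENNReal.mul_ne_top]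
  · have hcont : Continuous fun γ : ℝ≥0 => (f (p.1 + γ * p.2) : ℝ≥0∞) := by fun_prop
    simpa using (hcont.tendsto 0).mono_left nhdsWithin_le_nhds

/-- The Poisson integrals are the densities of the convolutions with the Cauchy distributions,
which converge weakly to `δ₀`. -/
lemma eq_of_poissonIntegral_eq {ν₁ ν₂ : Measure ℝ} [IsFiniteMeasure ν₁] [SFinite ν₂]
    (h : ∀ γ : ℝ≥0, γ ≠ 0 → poissonIntegral ν₁ γ = poissonIntegral ν₂ γ) : ν₁ = ν₂ := by
  have hconv (γ : ℝ≥0) (hγ : γ ≠ 0) :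
      ν₁.conv (cauchyMeasure 0 γ) = ν₂.conv (cauchyMeasure 0 γ) := by
    rw [conv_cauchyMeasure ν₁ hγ, conv_cauchyMeasure ν₂ hγ, h γ hγ]
  have : IsFiniteMeasure ν₂ := by
    have huniv := congr($(hconv 1 one_ne_zero) Set.univ)
    simp only [conv_univ, measure_univ, mul_one] at huniv
    exact ⟨huniv ▸ measure_lt_top ν₁ _⟩
  refine ext_of_forall_lintegral_eq_of_IsFiniteMeasure fun f => ?_
  refine tendsto_nhds_unique (tendsto_lintegral_conv_cauchyMeasure ν₁ f) ?_
  refine (tendsto_lintegral_conv_cauchyMeasure ν₂ f).congr' ?_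
  filter_upwards [self_mem_nhdsWithin] with γ hγ
  rw [hconv γ (ne_of_gt hγ)]

lemma measurable_of_measurable_lintegral {Ω X : Type*} [MeasurableSpace Ω] [TopologicalSpace X]
    [HasOuterApproxClosed X] [MeasurableSpace X] [BorelSpace X] {ν : Ω → Measure X}
    [∀ a, IsFiniteMeasure (ν a)] (h : ∀ f : X →ᵇ ℝ≥0, Measurable fun a => ∫⁻ x, f x ∂(ν a)) :
    Measurable ν := by
  have hclosed (F : Set X) (hF : IsClosed F) : Measurable fun a => ν a F :=
    measurable_of_tendsto_metrizable (fun n => h (hF.apprSeq n)) <| tendsto_pi_nhds.2 fun a =>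
      HasOuterApproxClosed.tendsto_lintegral_apprSeq hF (ν a)
  exact Measurable.measure_of_isPiSystem
    (BorelSpace.measurable_eq.trans borel_eq_generateFrom_isClosed) isPiSystem_isClosed
    hclosed (hclosed _ isClosed_univ)

lemma continuous_poissonIntegral (ν : Measure ℝ) [IsFiniteMeasure ν] {γ : ℝ≥0} (hγ : γ ≠ 0) :
    Continuous (poissonIntegral ν γ) := by
  have : (γ : ℝ) ≠ 0 := by exact_mod_cast hγ
  have hcont (l : ℝ) : Continuous (cauchyPDF l γ) := by
    refine ENNReal.continuous_ofReal.comp ?_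
    unfold cauchyPDFReal
    fun_prop (disch := intros; positivity)
  have hfin : ∫⁻ _, ENNReal.ofReal (Real.pi⁻¹ * (γ : ℝ)⁻¹) ∂ν ≠ ⊤ := by
    rw [lintegral_const]
    exact ENNReal.mul_ne_top ENNReal.ofReal_ne_top (measure_ne_top ν _)
  refine continuous_iff_continuousAt.2 fun x => ?_
  exact tendsto_lintegral_filter_of_dominated_convergence _ (Eventually.of_forall <|
    measurable_cauchyPDF_location γ)
    (Eventually.of_forall fun y => Eventually.of_forall fun l => cauchyPDF_le l γ y)
    hfin (Eventually.of_forall fun l => (hcont l).tendsto x)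

lemma measurable_of_measurable_poissonIntegral {Ω : Type*} [MeasurableSpace Ω] {ν : Ω → Measure ℝ}
    [∀ a, IsFiniteMeasure (ν a)]
    (h : ∀ γ : ℝ≥0, γ ≠ 0 → ∀ x, Measurable fun a => poissonIntegral (ν a) γ x) :
    Measurable ν := by
  have hconv (f : ℝ →ᵇ ℝ≥0) {γ : ℝ≥0} (hγ : γ ≠ 0) :
      Measurable fun a => ∫⁻ x, f x ∂((ν a).conv (cauchyMeasure 0 γ)) := by
    have hjoint : Measurable (Function.uncurry fun x a => poissonIntegral (ν a) γ x) :=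
      measurable_uncurry_of_continuous_of_measurable
        (fun a => continuous_poissonIntegral (ν a) hγ) (h γ hγ)
    have heq (a : Ω) : ∫⁻ x, f x ∂((ν a).conv (cauchyMeasure 0 γ)) =
        ∫⁻ x, poissonIntegral (ν a) γ x * f x := by
      rw [conv_cauchyMeasure _ hγ, lintegral_withDensity_eq_lintegral_mul _
        (continuous_poissonIntegral _ hγ).measurable (by fun_prop)]
      rfl
    simp_rw [heq]
    have hf : Measurable fun p : ℝ × Ω => (f p.1 : ℝ≥0∞) := by fun_prop
    exact (hjoint.mul hf).lintegral_prod_left'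
  refine measurable_of_measurable_lintegral fun f => measurable_of_tendsto_metrizable'
    atTop (f := fun n : ℕ => fun a => ∫⁻ x, f x ∂((ν a).conv (cauchyMeasure 0 (1 / (n + 1)))))
    (fun n => hconv f (by positivity)) (tendsto_pi_nhds.2 fun a => ?_)
  refine (tendsto_lintegral_conv_cauchyMeasure (ν a) f).comp (tendsto_nhdsWithin_iff.2
    ⟨tendsto_one_div_add_atTop_nhds_zero_nat, Eventually.of_forall fun n => ?_⟩)
  exact (by positivity : (0 : ℝ≥0) < 1 / (n + 1))

lemma im_inv_ofReal_sub (l : ℝ) (z : ℂ) :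
    ((l - z : ℂ)⁻¹).im = z.im / ((l - z.re) ^ 2 + z.im ^ 2) := by
  simp [Complex.inv_im, Complex.normSq_apply, sq]

lemma integrable_inv_ofReal_sub (ν : Measure ℝ) [IsFiniteMeasure ν] {z : ℂ} (hz : 0 < z.im) :
    Integrable (fun l : ℝ => (l - z : ℂ)⁻¹) ν := by
  have hmeas : Measurable fun l : ℝ => (l - z : ℂ)⁻¹ := by fun_prop
  refine .of_bound hmeas.aestronglyMeasurable z.im⁻¹ (Eventually.of_forall fun l => ?_)
  rw [norm_inv]
  gcongr
  simpa [abs_of_pos hz] using Complex.abs_im_le_norm (l - z)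

lemma ofReal_mul_im_integral {Ω : Type*} [MeasurableSpace Ω] {μ : Measure Ω} {φ : Ω → ℂ}
    (hφ : Integrable φ μ) (hnonneg : ∀ a, 0 ≤ (φ a).im) {c : ℝ} (hc : 0 ≤ c) :
    ENNReal.ofReal (c * (∫ a, φ a ∂μ).im) = ∫⁻ a, ENNReal.ofReal (c * (φ a).im) ∂μ := by
  have him : (∫ a, φ a ∂μ).im = ∫ a, (φ a).im ∂μ := (integral_im hφ).symm
  rw [him, ← integral_const_mul]
  exact ofReal_integral_eq_lintegral_ofReal (hφ.im.const_mul c)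
    (Eventually.of_forall fun a => mul_nonneg hc (hnonneg a))

lemma im_stieltjesTransform_nonneg (ν : Measure ℝ) {z : ℂ} (hz : 0 ≤ z.im) :
    0 ≤ (stieltjesTransform ν z).im := by
  by_cases hν : Integrable (fun l : ℝ => (l - z : ℂ)⁻¹) ν
  · have him : (stieltjesTransform ν z).im = ∫ l : ℝ, ((l - z : ℂ)⁻¹).im ∂ν :=
      (integral_im hν).symm
    simp_rw [him, im_inv_ofReal_sub]
    positivity
  · simp [stieltjesTransform, integral_undef hν]

lemma poissonIntegral_eq_ofReal_im_stieltjesTransform {ν : Measure ℝ} {γ : ℝ≥0} {x : ℝ}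
    (hν : Integrable (fun l : ℝ => (l - (x + γ * I) : ℂ)⁻¹) ν) :
    poissonIntegral ν γ x =
      ENNReal.ofReal (Real.pi⁻¹ * (stieltjesTransform ν (x + γ * I)).im) := by
  have him (l : ℝ) : ((l - (x + γ * I) : ℂ)⁻¹).im = γ * ((x - l) ^ 2 + γ ^ 2)⁻¹ := by
    rw [im_inv_ofReal_sub]
    simp [div_eq_mul_inv, sub_sq_comm x l]
  rw [stieltjesTransform, ofReal_mul_im_integral hν (fun l => him l ▸ by positivity)
    (by positivity)]
  exact lintegral_congr fun l => by rw [cauchyPDF_def, cauchyPDFReal_def, him, mul_assoc]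

lemma integrable_measureReal {Ω X : Type*} [MeasurableSpace Ω] [MeasurableSpace X]
    {ν : Ω → Measure X} {μ : Measure Ω} (hν : AEMeasurable ν μ) [IsFiniteMeasure (μ.bind ν)]
    {B : Set X} (hB : MeasurableSet B) : Integrable (fun a => (ν a).real B) μ := by
  refine integrable_toReal_of_lintegral_ne_top ((Measure.measurable_coe hB).comp_aemeasurable hν) ?_
  rw [← Measure.bind_apply hB hν]
  exact measure_ne_top _ B

lemma integral_measureReal_eq {Ω X : Type*} [MeasurableSpace Ω] [MeasurableSpace X]
    {ν : Ω → Measure X} [∀ a, IsFiniteMeasure (ν a)] {μ : Measure Ω} (hν : AEMeasurable ν μ)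
    {B : Set X} (hB : MeasurableSet B) : ∫ a, (ν a).real B ∂μ = (μ.bind ν).real B := by
  rw [measureReal_def, Measure.bind_apply hB hν]
  exact integral_toReal ((Measure.measurable_coe hB).comp_aemeasurable hν)
    (Eventually.of_forall fun a => measure_lt_top (ν a) B)

section Average

variable {Ω : Type*} [MeasurableSpace Ω] {ν : Ω → Measure ℝ} [∀ a, IsFiniteMeasure (ν a)]

lemma measurable_of_measurable_stieltjesTransform
    (h : ∀ z : ℂ, 0 < z.im → Measurable fun a => stieltjesTransform (ν a) z) : Measurable ν := by
  refine measurable_of_measurable_poissonIntegral fun γ hγ x => ?_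
  have hz : 0 < (x + γ * I : ℂ).im := by simpa using pos_iff_ne_zero.2 hγ
  simp_rw [fun a => poissonIntegral_eq_ofReal_im_stieltjesTransform
    (integrable_inv_ofReal_sub (ν a) hz)]
  exact ((measurable_im.comp (h _ hz)).const_mul _).ennreal_ofReal

variable {μ : Measure Ω}

lemma poissonIntegral_bind (hν : AEMeasurable ν μ) {γ : ℝ≥0} (hγ : γ ≠ 0) {x : ℝ}
    (hint : Integrable (fun a => stieltjesTransform (ν a) (x + γ * I)) μ) :
    poissonIntegral (μ.bind ν) γ x =
      ENNReal.ofReal (Real.pi⁻¹ * (∫ a, stieltjesTransform (ν a) (x + γ * I) ∂μ).im) := by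
  have hz : 0 < (x + γ * I : ℂ).im := by simpa using pos_iff_ne_zero.2 hγ
  rw [ofReal_mul_im_integral hint (fun a => im_stieltjesTransform_nonneg (ν a) hz.le)
    (by positivity), poissonIntegral,
    Measure.lintegral_bind hν (measurable_cauchyPDF_location γ x).aemeasurable]
  exact lintegral_congr fun a => poissonIntegral_eq_ofReal_im_stieltjesTransform
    (integrable_inv_ofReal_sub (ν a) hz)

lemma bind_eq_of_integral_stieltjesTransform_eq {ρ : Measure ℝ} [SFinite ρ]
    (hν : AEMeasurable ν μ) [IsFiniteMeasure (μ.bind ν)]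
    (hint : ∀ z : ℂ, 0 < z.im → Integrable (fun a => stieltjesTransform (ν a) z) μ)
    (hρ : ∀ z : ℂ, 0 < z.im → Integrable (fun l : ℝ => (l - z : ℂ)⁻¹) ρ)
    (h : ∀ z : ℂ, 0 < z.im → ∫ a, stieltjesTransform (ν a) z ∂μ = stieltjesTransform ρ z) :
    μ.bind ν = ρ := by
  refine eq_of_poissonIntegral_eq fun γ hγ => funext fun x => ?_
  have hz : 0 < (x + γ * I : ℂ).im := by simpa using pos_iff_ne_zero.2 hγ
  rw [poissonIntegral_bind hν hγ (hint _ hz),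
    poissonIntegral_eq_ofReal_im_stieltjesTransform (hρ _ hz), h _ hz]

lemma integral_measureReal_eq_setIntegral {ξ : ℝ → ℝ≥0} (hξ : AEMeasurable ξ)
    (hν : AEMeasurable ν μ) [IsFiniteMeasure (μ.bind ν)]
    (hint : ∀ z : ℂ, 0 < z.im → Integrable (fun a => stieltjesTransform (ν a) z) μ)
    (hρ : ∀ z : ℂ, 0 < z.im → Integrable fun l : ℝ => (l - z : ℂ)⁻¹ * ξ l)
    (h : ∀ z : ℂ, 0 < z.im →
      ∫ a, stieltjesTransform (ν a) z ∂μ = ∫ l : ℝ, (l - z : ℂ)⁻¹ * ξ l)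
    {B : Set ℝ} (hB : MeasurableSet B) :
    IntegrableOn (fun l => (ξ l : ℝ)) B ∧ ∫ a, (ν a).real B ∂μ = ∫ l in B, (ξ l : ℝ) := by
  have hcomm (z : ℂ) (l : ℝ) : ξ l • (l - z : ℂ)⁻¹ = (l - z : ℂ)⁻¹ * ξ l := by
    rw [NNReal.smul_def, Complex.real_smul, mul_comm]
  have hbind : μ.bind ν = volume.withDensity fun l => (ξ l : ℝ≥0∞) := by
    refine bind_eq_of_integral_stieltjesTransform_eq hν hint (fun z hz => ?_) fun z hz => ?_
    · rw [integrable_withDensity_iff_integrable_smul₀ hξ]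
      simpa only [hcomm] using hρ z hz
    · rw [h z hz, stieltjesTransform, integral_withDensity_eq_integral_smul₀ hξ]
      simp only [hcomm]
  have happly : (μ.bind ν) B = ∫⁻ l in B, ξ l := by rw [hbind, withDensity_apply _ hB]
  refine ⟨integrable_toReal_of_lintegral_ne_top hξ.coe_nnreal_ennreal.restrict ?_, ?_⟩
  · exact happly ▸ measure_ne_top (μ.bind ν) B
  · rw [integral_measureReal_eq hν hB, measureReal_def, happly]
    exact (integral_toReal hξ.coe_nnreal_ennreal.restrict
      (Eventually.of_forall fun l => ENNReal.coe_lt_top)).symm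

end Average

end Measures

section Polarization

variable {G : Type*} [NormedAddCommGroup G] [InnerProductSpace ℂ G]
  {α : Type*} [MeasurableSpace α] {μ : Measure α} {T : α → G →L[ℂ] G}

lemma inner_apply_polarization (T : G →L[ℂ] G) (f g : G) :
    ⟪f, T g⟫_ℂ = (⟪f + g, T (f + g)⟫_ℂ - ⟪f - g, T (f - g)⟫_ℂ -
      I * ⟪f + I • g, T (f + I • g)⟫_ℂ + I * ⟪f - I • g, T (f - I • g)⟫_ℂ) / 4 := by
  simp only [map_add, map_sub, map_smul, inner_add_left, inner_add_right, inner_sub_left,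
    inner_sub_right, inner_smul_left, inner_smul_right, conj_I]
  linear_combination (⟪f, T g⟫_ℂ - ⟪g, T f⟫_ℂ) / 2 * I_sq

lemma integrable_inner_of_diagonal (hT : ∀ f, Integrable (fun a => ⟪f, T a f⟫_ℂ) μ) (f g : G) :
    Integrable (fun a => ⟪f, T a g⟫_ℂ) μ := by
  simp_rw [fun a => inner_apply_polarization (T a) f g]
  exact ((((hT _).sub (hT _)).sub ((hT _).const_mul I)).add ((hT _).const_mul I)).div_const 4

lemma integral_inner_polarization (hT : ∀ f, Integrable (fun a => ⟪f, T a f⟫_ℂ) μ) (f g : G) :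
    ∫ a, ⟪f, T a g⟫_ℂ ∂μ =
      (∫ a, ⟪f + g, T a (f + g)⟫_ℂ ∂μ - ∫ a, ⟪f - g, T a (f - g)⟫_ℂ ∂μ -
        I * ∫ a, ⟪f + I • g, T a (f + I • g)⟫_ℂ ∂μ +
        I * ∫ a, ⟪f - I • g, T a (f - I • g)⟫_ℂ ∂μ) / 4 := by
  simp_rw [fun a => inner_apply_polarization (T a) f g]
  have hsub (u v : G) : Integrable (fun a => ⟪u, T a u⟫_ℂ - ⟪v, T a v⟫_ℂ) μ := (hT u).sub (hT v)
  have hsub_I (u v w : G) :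
      Integrable (fun a => ⟪u, T a u⟫_ℂ - ⟪v, T a v⟫_ℂ - I * ⟪w, T a w⟫_ℂ) μ :=
    (hsub u v).sub ((hT w).const_mul I)
  rw [integral_div, integral_add (hsub_I _ _ _) ((hT _).const_mul I),
    integral_sub (hsub _ _) ((hT _).const_mul I), integral_sub (hT _) (hT _),
    integral_const_mul, integral_const_mul]

end Polarization

section SpectralMeasure

lemma ofReal_toNNReal_re_inner {V : Type*} [NormedAddCommGroup V] [InnerProductSpace ℂ V]
    {T : V →L[ℂ] V} (hT : T.IsPositive) (x : V) :
    (((⟪x, T x⟫_ℂ).re.toNNReal : ℝ) : ℂ) = ⟪x, T x⟫_ℂ := by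
  obtain ⟨hre, him⟩ := Complex.nonneg_iff.1 (hT.inner_nonneg_right x)
  rw [Real.coe_toNNReal _ hre]
  exact Complex.ext rfl him

namespace IsSpectralMeasure

variable {A : SelfAdjointOp H} {E : Set ℝ → H →L[ℂ] H}

/-- The scalar spectral measure `⟪x, E(·) x⟫` of the vector `x`. -/
def scalar (hE : IsSpectralMeasure A E) (x : H) : Measure ℝ :=
  hE.2.2.2.2.choose x

lemma scalar_apply (hE : IsSpectralMeasure A E) (x : H) {B : Set ℝ} (hB : MeasurableSet B) :
    hE.scalar x B = ENNReal.ofReal (⟪x, E B x⟫_ℂ).re :=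
  hE.2.2.2.2.choose_spec.1 x B hB

instance isFiniteMeasure_scalar (hE : IsSpectralMeasure A E) (x : H) :
    IsFiniteMeasure (hE.scalar x) :=
  ⟨by rw [hE.scalar_apply x .univ]; exact ENNReal.ofReal_lt_top⟩

lemma stieltjesTransform_scalar (hE : IsSpectralMeasure A E) (x : H) {z : ℂ} (hz : z.im ≠ 0) :
    stieltjesTransform (hE.scalar x) z = ⟪x, A.resolvent z x⟫_ℂ :=
  (hE.2.2.2.2.choose_spec.2 z hz x).symm

lemma isPositive (hE : IsSpectralMeasure A E) {B : Set ℝ} (hB : MeasurableSet B) :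
    (E B).IsPositive :=
  .of_isStarProjection
    ⟨by rw [IsIdempotentElem, hE.2.1 B B hB hB, Set.inter_self], hE.1 B hB⟩

lemma ofReal_measureReal_scalar (hE : IsSpectralMeasure A E) (x : H) {B : Set ℝ}
    (hB : MeasurableSet B) : (((hE.scalar x).real B : ℝ) : ℂ) = ⟪x, E B x⟫_ℂ := by
  rw [measureReal_def, hE.scalar_apply x hB]
  exact ofReal_toNNReal_re_inner (hE.isPositive hB) x

lemma scalar_univ (hE : IsSpectralMeasure A E) (x : H) :
    hE.scalar x Set.univ = ENNReal.ofReal (‖x‖ ^ 2) := by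
  rw [hE.scalar_apply x .univ, hE.2.2.1]
  exact congrArg _ (inner_self_eq_norm_sq (𝕜 := ℂ) x)

end IsSpectralMeasure

end SpectralMeasure

section SpectralAveraging

open scoped NNReal

lemma integral_unitInterval (φ : ℝ → ℂ) : ∫ s : unitInterval, φ s = ∫ s in 0..1, φ s := by
  rw [intervalIntegral.integral_of_le zero_le_one, ← integral_Icc_eq_integral_Ioc]
  exact integral_subtype measurableSet_Icc φ

lemma integrable_unitInterval_iff {φ : ℝ → ℂ} :
    Integrable (fun s : unitInterval => φ s) ↔ IntervalIntegrable φ volume 0 1 := by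
  rw [intervalIntegrable_iff_integrableOn_Icc_of_le zero_le_one]
  exact (integrableOn_iff_comap_subtypeVal measurableSet_Icc).symm

lemma aemeasurable_of_integrable_inv_sub_mul {φ : ℝ → ℂ} {z : ℂ} (hz : z.im ≠ 0)
    (hφ : Integrable fun l : ℝ => (l - z : ℂ)⁻¹ * φ l) : AEMeasurable φ := by
  have hne (l : ℝ) : (l - z : ℂ) ≠ 0 := fun h => hz <| by simpa using congrArg Complex.im h
  have hmeas : Measurable fun l : ℝ => (l - z : ℂ) := by fun_prop
  exact (hmeas.aemeasurable.mul hφ.aemeasurable).congr <|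
    Eventually.of_forall fun l => mul_inv_cancel_left₀ (hne l) (φ l)

variable {G : Type*} [NormedAddCommGroup G] [InnerProductSpace ℂ G] [CompleteSpace G]
  {A : SelfAdjointOp H} {K : G →L[ℂ] H}

namespace IsSpectralMeasure

variable {E : Set ℝ → H →L[ℂ] H} (hE : IsSpectralMeasure A E) (K : G →L[ℂ] H) (f : G)

lemma stieltjesTransform_scalar_apply {z : ℂ} (hz : z.im ≠ 0) :
    stieltjesTransform (hE.scalar (K f)) z = ⟪f, A.sandwich K z f⟫_ℂ :=
  (hE.stieltjesTransform_scalar (K f) hz).trans (adjoint_inner_right K f _).symm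

lemma ofReal_measureReal_scalar_apply {B : Set ℝ} (hB : MeasurableSet B) :
    (((hE.scalar (K f)).real B : ℝ) : ℂ) = ⟪f, (adjoint K ∘L E B ∘L K) f⟫_ℂ :=
  (hE.ofReal_measureReal_scalar (K f) hB).trans (adjoint_inner_right K f _).symm

end IsSpectralMeasure

variable {Hs : ℝ → SelfAdjointOp H} {E : ℝ → Set ℝ → H →L[ℂ] H}

lemma continuous_inner_sandwich
    (hHs : ∀ s ∈ unitInterval, IsSumOf (Hs s) A ((s : ℂ) • (K ∘L adjoint K))) (f g : G)
    {z : ℂ} (hz : z.im ≠ 0) : Continuous fun s : unitInterval => ⟪f, (Hs s).sandwich K z g⟫_ℂ :=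
  continuous_const.inner <|
    (continuousOn_sandwich hHs hz).domRestrict.clm_apply continuous_const

lemma integral_inner_sandwich
    (hHs : ∀ s ∈ unitInterval, IsSumOf (Hs s) A ((s : ℂ) • (K ∘L adjoint K))) (f g : G)
    {z : ℂ} (hz : 0 < z.im) :
    ∫ s : unitInterval, ⟪f, (Hs s).sandwich K z g⟫_ℂ =
      ⟪f, opLog (1 + A.sandwich K z) g⟫_ℂ := by
  have hint : IntervalIntegrable (fun s => (Hs s).sandwich K z) volume 0 1 :=
    (continuousOn_sandwich hHs hz.ne').intervalIntegrable_of_Icc zero_le_one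
  rw [integral_unitInterval fun s => ⟪f, (Hs s).sandwich K z g⟫_ℂ, opLog_one_add_sandwich hHs hz]
  exact ((innerSL ℂ f).comp (apply ℂ G g)).intervalIntegral_comp_comm hint

lemma measurable_scalar
    (hHs : ∀ s ∈ unitInterval, IsSumOf (Hs s) A ((s : ℂ) • (K ∘L adjoint K)))
    (hE : ∀ s ∈ unitInterval, IsSpectralMeasure (Hs s) (E s)) (f : G) :
    Measurable fun s : unitInterval => (hE s s.2).scalar (K f) := by
  refine measurable_of_measurable_stieltjesTransform fun z hz => ?_
  simpa only [fun s : unitInterval => (hE s s.2).stieltjesTransform_scalar_apply K f hz.ne'] using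
    (continuous_inner_sandwich hHs f f hz.ne').measurable

lemma isFiniteMeasure_bind_scalar
    (hHs : ∀ s ∈ unitInterval, IsSumOf (Hs s) A ((s : ℂ) • (K ∘L adjoint K)))
    (hE : ∀ s ∈ unitInterval, IsSpectralMeasure (Hs s) (E s)) (f : G) :
    IsFiniteMeasure ((volume : Measure unitInterval).bind fun s => (hE s s.2).scalar (K f)) := by
  refine ⟨?_⟩
  rw [Measure.bind_apply .univ (measurable_scalar hHs hE f).aemeasurable]
  simp [IsSpectralMeasure.scalar_univ]

variable {Ξ : ℝ → G →L[ℂ] G}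

lemma spectral_averaging_diagonal
    (hHs : ∀ s ∈ unitInterval, IsSumOf (Hs s) A ((s : ℂ) • (K ∘L adjoint K)))
    (hE : ∀ s ∈ unitInterval, IsSpectralMeasure (Hs s) (E s)) (hΞ : ∀ᵐ l, (Ξ l).IsPositive) {f : G}
    (hint : ∀ z : ℂ, 0 < z.im → Integrable fun l : ℝ => (l - z : ℂ)⁻¹ * ⟪f, Ξ l f⟫_ℂ)
    (hrep : ∀ z : ℂ, 0 < z.im → ⟪f, opLog (1 + A.sandwich K z) f⟫_ℂ =
      ∫ l : ℝ, (l - z : ℂ)⁻¹ * ⟪f, Ξ l f⟫_ℂ) {B : Set ℝ} (hB : MeasurableSet B) :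
    Integrable (fun s : unitInterval => ⟪f, (adjoint K ∘L E s B ∘L K) f⟫_ℂ) ∧
      IntegrableOn (fun l => ⟪f, Ξ l f⟫_ℂ) B ∧
      ∫ s : unitInterval, ⟪f, (adjoint K ∘L E s B ∘L K) f⟫_ℂ = ∫ l in B, ⟪f, Ξ l f⟫_ℂ := by
  let ξ (l : ℝ) : ℝ≥0 := (⟪f, Ξ l f⟫_ℂ).re.toNNReal
  have hξ : (fun l => ((ξ l : ℝ) : ℂ)) =ᵐ[volume] fun l => ⟪f, Ξ l f⟫_ℂ :=
    hΞ.mono fun l hl => ofReal_toNNReal_re_inner hl f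
  have hξ_mul (z : ℂ) : (fun l : ℝ => (l - z : ℂ)⁻¹ * (ξ l : ℝ)) =ᵐ[volume]
      fun l => (l - z : ℂ)⁻¹ * ⟪f, Ξ l f⟫_ℂ := hξ.mono fun l hl => congrArg _ hl
  have hξ_meas : AEMeasurable ξ := by
    have hmeas := aemeasurable_of_integrable_inv_sub_mul (z := I) (by simp) (hint I (by simp))
    exact (measurable_re.comp_aemeasurable hmeas).real_toNNReal
  have hstieltjes {z : ℂ} (hz : 0 < z.im) (s : unitInterval) :=
    (hE s s.2).stieltjesTransform_scalar_apply K f hz.ne'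
  have hν := (measurable_scalar hHs hE f).aemeasurable (μ := volume)
  have := isFiniteMeasure_bind_scalar hHs hE f
  obtain ⟨hξB, heq⟩ := integral_measureReal_eq_setIntegral hξ_meas hν
    (fun z hz => by
      simpa only [hstieltjes hz] using (continuous_inner_sandwich hHs f f
        hz.ne').integrable_of_hasCompactSupport (.of_compactSpace _))
    (fun z hz => (hint z hz).congr (hξ_mul z).symm)
    (fun z hz => by
      simp_rw [hstieltjes hz, integral_inner_sandwich hHs f f hz, hrep z hz]
      exact (integral_congr_ae (hξ_mul z)).symm) hB
  simp only [← fun s : unitInterval => (hE s s.2).ofReal_measureReal_scalar_apply K f hB]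
  refine ⟨(integrable_measureReal hν hB).ofReal, hξB.ofReal.congr hξ.restrict, ?_⟩
  rw [integral_complex_ofReal, heq, ← integral_complex_ofReal]
  exact integral_congr_ae hξ.restrict

theorem operator_valued_spectral_averaging_general
    (hHs : ∀ s ∈ Set.Icc (0 : ℝ) 1, IsSumOf (Hs s) A ((s : ℂ) • (K ∘L adjoint K)))
    (hE : ∀ s ∈ Set.Icc (0 : ℝ) 1, IsSpectralMeasure (Hs s) (E s))
    (hΞ : ∀ᵐ l, (Ξ l).IsPositive)
    (hrep : ∀ z : ℂ, 0 < z.im → ∀ f g : G,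
      Integrable (fun l : ℝ => (l - z : ℂ)⁻¹ * ⟪f, Ξ l g⟫_ℂ) ∧
      ⟪f, opLog (1 + A.sandwich K z) g⟫_ℂ = ∫ l : ℝ, (l - z : ℂ)⁻¹ * ⟪f, Ξ l g⟫_ℂ)
    (f g : G) {B : Set ℝ} (hB : MeasurableSet B) :
    IntervalIntegrable (fun s => ⟪f, (adjoint K ∘L E s B ∘L K) g⟫_ℂ) volume 0 1 ∧
      IntegrableOn (fun l => ⟪f, Ξ l g⟫_ℂ) B ∧
      ∫ s in 0..1, ⟪f, (adjoint K ∘L E s B ∘L K) g⟫_ℂ = ∫ l in B, ⟪f, Ξ l g⟫_ℂ := by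
  have hdiag (h : G) := spectral_averaging_diagonal hHs hE hΞ
    (fun z hz => (hrep z hz h h).1) (fun z hz => (hrep z hz h h).2) hB
  refine ⟨integrable_unitInterval_iff.1 (integrable_inner_of_diagonal (fun h => (hdiag h).1) f g),
    integrable_inner_of_diagonal (fun h => (hdiag h).2.1) f g, ?_⟩
  rw [← integral_unitInterval, integral_inner_polarization (fun h => (hdiag h).1),
    integral_inner_polarization (fun h => (hdiag h).2.1)]
  simp only [fun h => (hdiag h).2.2]

end SpectralAveraging

/-- Theorem 4.5 (operator-valued spectral averaging): for `H(s) = H₀ + sKK*`,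
`∫₀¹ d(K* E_{H(s)}(λ) K) ds = Ξ(λ) dλ` in the weak sense, where `Ξ` is the spectral
shift operator associated with `Φ(z) = I + K*(H₀-z)⁻¹K`. -/
theorem operator_valued_spectral_averaging [SeparableSpace H]
    (H0 : SelfAdjointOp H) (K : H →L[ℂ] H) (hK : IsHilbertSchmidt K)
    (Hs : ℝ → SelfAdjointOp H)
    (hHs : ∀ s ∈ Set.Icc (0 : ℝ) 1,
      IsSumOf (Hs s) H0 ((s : ℂ) • (K * ContinuousLinearMap.adjoint K)))
    (E : ℝ → Set ℝ → H →L[ℂ] H)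
    (hE : ∀ s ∈ Set.Icc (0 : ℝ) 1, IsSpectralMeasure (Hs s) (E s))
    (Ξ : ℝ → H →L[ℂ] H)
    (hmeas : ∀ f g : H, Measurable fun l : ℝ => ⟪f, Ξ l g⟫_ℂ)
    (hbd : ∀ᵐ l ∂(volume : Measure ℝ),
      (Ξ l).IsPositive ∧ ((1 : H →L[ℂ] H) - Ξ l).IsPositive ∧ IsTraceClass (Ξ l))
    (hL1 : Integrable fun l : ℝ => traceNorm (Ξ l))
    (hrep : ∀ z : ℂ, z.im ≠ 0 → ∀ f g : H,
      Integrable (fun l : ℝ => ((l : ℂ) - z)⁻¹ * ⟪f, Ξ l g⟫_ℂ) ∧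
      ⟪f, logHerg
          (fun w => 1 + ContinuousLinearMap.adjoint K * H0.resolvent w * K) z g⟫_ℂ =
        ∫ l : ℝ, ((l : ℂ) - z)⁻¹ * ⟪f, Ξ l g⟫_ℂ) :
    ∀ f g : H, ∀ B : Set ℝ, MeasurableSet B → Bornology.IsBounded B →
      ∫ s in (0:ℝ)..1, ⟪f, (ContinuousLinearMap.adjoint K * E s B * K) g⟫_ℂ =
        ∫ l in B, ⟪f, Ξ l g⟫_ℂ := by
  intro f g B hB _
  refine (operator_valued_spectral_averaging_general hHs hE (hbd.mono fun l hl => hl.1)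
    (fun z hz f g => ?_) f g hB).2.2
  have hrep_upper := hrep z hz.ne' f g
  rwa [logHerg, if_pos hz] at hrep_upper

end SpectralShift
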